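/- Let A be a complex semisimple unital Banach algebra with Soc A ≠ {0}. Then the left annihilator l(Soc A) equals {0} if and only if for all a, b ∈ A the following are equivalent: (i) a = b; (ii) σ(ax) = σ(bx) for all rank one elements x ∈ A; (iii) σ(a + x) = σ(b + x) for all rank one elements x ∈ A. -/

import Mathlib

open Complex

noncomputable section

/-- The nonzero spectrum `σ'(x) = σ(x) \ {0}` of an element of a complex algebra. -/
def nzSpec {A : Type*} [Ring A] [Algebra ℂ A] (x : A) : Set ℂ :=
  spectrum ℂ x \ {0}

/-- The spectral rank of an element: `rank a = sup_{x ∈ A} #σ'(xa)`, valued in `ℕ∞`. -/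
noncomputable def srank {A : Type*} [Ring A] [Algebra ℂ A] (a : A) : ℕ∞ :=
  ⨆ x : A, (nzSpec (x * a)).encard

/-- The socle of `A`: the set of finite-rank elements. -/
def socle (A : Type*) [Ring A] [Algebra ℂ A] : Set A :=
  {a : A | srank a ≠ ⊤}

/-- `A` is (Jacobson) semisimple: its Jacobson radical is `{0}`. -/
def JacobsonSemisimple (A : Type*) [Ring A] : Prop :=
  TwoSidedIdeal.jacobson (⊥ : TwoSidedIdeal A) = ⊥

/-- `Soc A` is a minimal two-sided ideal: it is a nonzero two-sided ideal containing
no two-sided ideals other than `{0}` and itself. -/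
def SocleIsMinimalTwoSidedIdeal (A : Type*) [Ring A] [Algebra ℂ A] : Prop :=
  ∃ I : TwoSidedIdeal A, (I : Set A) = socle A ∧ I ≠ ⊥ ∧
    ∀ J : TwoSidedIdeal A, J ≤ I → J = ⊥ ∨ J = I

/-- `A` is a prime algebra: all nonzero two-sided ideals `I, J` satisfy `IJ ≠ {0}`. -/
def IsPrimeAlgebra (A : Type*) [Ring A] : Prop :=
  ∀ I J : TwoSidedIdeal A, I ≠ ⊥ → J ≠ ⊥ → ∃ x ∈ I, ∃ y ∈ J, x * y ≠ 0

/-- The left annihilator of the socle equals `{0}`. -/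
def LeftAnnSocleTrivial (A : Type*) [Ring A] [Algebra ℂ A] : Prop :=
  {x : A | ∀ y ∈ socle A, x * y = 0} = {0}

set_option linter.unusedSectionVars false
section helpers

variable {A : Type*} [NormedRing A] [NormOneClass A] [NormedAlgebra ℂ A] [CompleteSpace A]

lemma qn_bound (e : A) (he : spectrum ℂ e ⊆ {0}) (ε : ℝ) (hε : 0 < ε) :
    ∀ᶠ n : ℕ in Filter.atTop, ‖e ^ n‖ ≤ ε ^ n := by
  have h0 : spectralRadius ℂ e = 0 := by
    unfold spectralRadius
    simp only [ENNReal.iSup_eq_zero]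
    intro k hk
    have := he hk
    simp at this
    simp [this]
  have h := spectrum.pow_norm_pow_one_div_tendsto_nhds_spectralRadius e
  rw [h0] at h
  have h2 := h.eventually (gt_mem_nhds (show (0:ENNReal) < ENNReal.ofReal ε by simpa using hε))
  filter_upwards [h2, Filter.eventually_gt_atTop 0] with n hn hn0
  rw [ENNReal.ofReal_lt_ofReal_iff hε] at hn
  have h3 : (‖e ^ n‖ ^ (1 / (n:ℝ))) ^ n ≤ ε ^ n :=
    pow_le_pow_left₀ (by positivity) hn.le n
  rwa [← Real.rpow_natCast, ← Real.rpow_mul (norm_nonneg _), one_div_mul_cancel (by positivity),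
    Real.rpow_one] at h3

lemma catalan_le (n : ℕ) : (catalan n : ℝ) ≤ 4 ^ n := by
  have h : catalan n ≤ 4 ^ n := by
    rw [catalan_eq_centralBinom_div]
    exact (Nat.div_le_self _ _).trans (Nat.centralBinom_le_four_pow n)
  exact_mod_cast h

lemma exists_catalan (e : A) (he : spectrum ℂ e ⊆ {0}) :
    ∃ T : A, T = 1 + e * (T * T) ∧ ∀ c, Commute c e → Commute c T := by
  let f : ℕ → A := fun n => (catalan n : ℂ) • e ^ n
  have hf : Summable (fun n => ‖f n‖) := by
    have hg : Summable (fun n : ℕ => (1/2 : ℝ) ^ n) := summable_geometric_two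
    refine summable_of_isBigO_nat hg (Asymptotics.IsBigO.of_bound 1 ?_)
    filter_upwards [qn_bound e he (1/8) (by norm_num)] with n hn
    rw [norm_norm, one_mul]
    calc ‖f n‖ ≤ ‖(catalan n : ℂ)‖ * ‖e ^ n‖ := norm_smul_le _ _
      _ ≤ 4 ^ n * (1/8) ^ n := by
          gcongr
          simpa using catalan_le n
      _ = (1/2) ^ n := by rw [← mul_pow]; norm_num
      _ ≤ _ := Real.le_norm_self _
  refine ⟨∑' n, f n, ?_, ?_⟩
  · rw [tsum_mul_tsum_eq_tsum_sum_antidiagonal_of_summable_norm hf hf]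
    have hs := (summable_norm_sum_mul_antidiagonal_of_summable_norm hf hf).of_norm
    rw [← hs.tsum_mul_left, hf.of_norm.tsum_eq_zero_add]
    congr 1
    · simp [f]
    · congr 1
      ext n
      simp only [f]
      rw [catalan_succ', Finset.mul_sum]
      push_cast
      rw [Finset.sum_smul]
      refine Finset.sum_congr rfl fun ij hij => ?_
      rw [Finset.HasAntidiagonal.mem_antidiagonal] at hij
      rw [smul_mul_smul_comm, ← pow_add, hij, mul_smul_comm, pow_succ']
  · intro c hc
    exact Commute.tsum_right c fun n => (hc.pow_right n).smul_right _

lemma idem_lift (b : A) (hb : spectrum ℂ b ⊆ {0, 1}) :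
    ∃ s s' : A, (b * s) * (b * s) = b * s ∧ 1 - b * s = (1 - b) * s' ∧
      Commute b s' ∧ ∀ c, Commute c b → Commute c s := by
  set e := b * b - b with he
  have hnt : Nontrivial A := NormOneClass.nontrivial (G := A)
  have hspe : spectrum ℂ e ⊆ {0} := by
    have : e = Polynomial.aeval b (Polynomial.X * Polynomial.X - Polynomial.X : Polynomial ℂ) := by
      simp [he]
    rw [this, spectrum.map_polynomial_aeval]
    rintro _ ⟨k, hk, rfl⟩
    rcases hb hk with rfl | h
    · simp
    · simp only [Set.mem_singleton_iff] at h; subst h; simp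
  have hun : ∀ κ : ℂ, IsUnit (1 + κ • e) := by
    intro κ
    by_cases hκ : κ = 0
    · simp [hκ]
    have h1 : -κ⁻¹ ∉ spectrum ℂ e := fun h => by
      have := hspe h
      simp [hκ] at this
    rw [spectrum.mem_iff, not_not] at h1
    have h2 : (1 + κ • e) = algebraMap ℂ A (-κ) * (algebraMap ℂ A (-κ⁻¹) - e) := by
      rw [mul_sub, ← map_mul, ← Algebra.smul_def]
      simp [hκ]
    rw [h2]
    exact ((isUnit_iff_ne_zero.2 (neg_ne_zero.2 hκ)).map (algebraMap ℂ A)).mul h1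
  set g := 1 + (4:ℂ) • e with hg
  obtain ⟨d, hgd⟩ := (hun 4).exists_right_inv
  have hdg : d * g = 1 := by
    obtain ⟨d', hd'⟩ := (hun 4).exists_left_inv
    have : d' = d := left_inv_eq_right_inv hd' hgd
    rw [← this]; exact hd'
  rw [← hg] at hgd
  have hcd : ∀ c, Commute c b → Commute c d := by
    intro c hc
    have h1 : Commute c g := by
      have : Commute c e := (hc.mul_right hc).sub_right hc
      exact (Commute.one_right c).add_right (this.smul_right _)
    change c * d = d * c
    calc c * d = (d * g) * (c * d) := by rw [hdg, one_mul]
      _ = d * (c * g) * d := by rw [h1.eq]; noncomm_ring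
      _ = d * c * (g * d) := by noncomm_ring
      _ = d * c := by rw [hgd, mul_one]
  have hce : ∀ c, Commute c b → Commute c e := fun c hc => (hc.mul_right hc).sub_right hc
  set e' := e * d with he'
  have hspe' : spectrum ℂ e' ⊆ {0} := by
    intro k hk
    by_contra hk0
    simp only [Set.mem_singleton_iff] at hk0
    apply hk
    have h2 : algebraMap ℂ A k - e' = (algebraMap ℂ A k * (1 + (4 - k⁻¹) • e)) * d := by
      have h3 : 1 + (4 - k⁻¹) • e = g - k⁻¹ • e := by rw [hg, sub_smul]; abel
      rw [h3, mul_assoc, sub_mul, hgd, ← Algebra.smul_def, smul_sub, smul_mul_assoc, smul_smul,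
        mul_inv_cancel₀ hk0, one_smul, Algebra.algebraMap_eq_smul_one]
    rw [spectrum.mem_resolventSet_iff, h2]
    refine (((isUnit_iff_ne_zero.2 hk0).map (algebraMap ℂ A)).mul (hun _)).mul ?_
    exact isUnit_iff_exists_and_exists.2 ⟨⟨g, hdg⟩, ⟨g, hgd⟩⟩
  obtain ⟨T, hT, hTc⟩ := exists_catalan e' hspe'
  have hcT : ∀ c, Commute c b → Commute c T := fun c hc =>
    hTc c ((hce c hc).mul_right (hcd c hc))
  set m := (b - 1) * (d * T) with hm
  have hbm : Commute b m :=
    ((Commute.refl b).sub_right (Commute.one_right b)).mul_right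
      ((hcd b (Commute.refl b)).mul_right (hcT b (Commute.refl b)))
  set y := b * m with hy
  have hby : Commute b y := (Commute.refl b).mul_right hbm
  have hye : y = e' * T := by rw [hy, hm, he', he]; noncomm_ring
  have hTe : Commute T e' := by
    have h1 : Commute T b := (hcT b (Commute.refl b)).symm
    exact (hce T h1).mul_right (hcd T h1)
  have hy2 : y = e' + y * y := by
    calc y = e' * (1 + e' * (T * T)) := by rw [← hT, hye]
      _ = e' + e' * (e' * T) * T := by noncomm_ring
      _ = e' + e' * (T * e') * T := by rw [hTe.eq]
      _ = e' + y * y := by rw [hye]; noncomm_ring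
  have hge : g * e' = e := by
    have : Commute g e := by
      have : Commute e e := Commute.refl e
      exact ((Commute.one_right e).add_right (this.smul_right _)).symm
    rw [he', ← mul_assoc, this.eq, mul_assoc, hgd, mul_one]
  have hgy : g * y = e + g * (y * y) := by
    rw [← hge, ← mul_add, ← hy2]
  have hgb : g = (1 - 2 * b) * (1 - 2 * b) := by
    rw [hg, he]
    have : (4:ℂ) • (b * b - b) = 4 * (b * b - b) := by
      rw [Algebra.smul_def, map_ofNat]
    rw [this]; noncomm_ring
  have hq : b * (1 + (1 - 2 * b) * m) = b + (1 - 2 * b) * y := by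
    rw [hy]; noncomm_ring
  refine ⟨1 + (1 - 2 * b) * m, 1 + (1 - 2 * b) * (b * (d * T)), ?_, ?_, ?_, ?_⟩
  · rw [hq]
    have c2 : y * (1 - 2 * b) = (1 - 2 * b) * y := by
      have : y * (1 - 2 * b) = y - 2 * (y * b) := by noncomm_ring
      rw [this, ← hby.eq]; noncomm_ring
    calc (b + (1 - 2 * b) * y) * (b + (1 - 2 * b) * y)
        = b * b + b * (1 - 2 * b) * y + (1 - 2 * b) * (y * b)
          + (1 - 2 * b) * (y * (1 - 2 * b)) * y := by noncomm_ring
      _ = b * b + b * (1 - 2 * b) * y + (1 - 2 * b) * (b * y)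
          + g * (y * y) := by rw [c2, ← hby.eq, hgb]; noncomm_ring
      _ = b * b + b * (1 - 2 * b) * y + (1 - 2 * b) * (b * y) + (g * y - e) := by
          rw [hgy]; abel
      _ = b + (1 - 2 * b) * y := by rw [hgb, he]; noncomm_ring
  · rw [hq, hy, hm]; noncomm_ring
  · have hc := Commute.refl b
    have h2 : Commute b (1 - 2 * b) := by
      have : Commute b (2 * b) := by
        rw [two_mul]; exact hc.add_right hc
      exact (Commute.one_right b).sub_right this
    exact (Commute.one_right b).add_right (h2.mul_right
      (hc.mul_right ((hcd b hc).mul_right (hcT b hc))))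
  · intro c hc
    have h2 : Commute c (1 - 2 * b) := by
      have : Commute c (2 * b) := by
        rw [two_mul]; exact hc.add_right hc
      exact (Commute.one_right c).sub_right this
    exact (Commute.one_right c).add_right (h2.mul_right
      ((hc.sub_right (Commute.one_right c)).mul_right ((hcd c hc).mul_right (hcT c hc))))

lemma riesz (a : A) (hfin : (spectrum ℂ a).Finite) (l : ℂ) (hl : l ∈ spectrum ℂ a) (hl0 : l ≠ 0) :
    ∃ p s : A, p = a * s ∧ Commute a s ∧ p * p = p ∧ p ≠ 0 ∧
      ∀ μ ∈ spectrum ℂ a, μ ≠ l → ∃ k, p = (a - algebraMap ℂ A μ) * k ∧ Commute a k := by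
  classical
  have hnt : Nontrivial A := NormOneClass.nontrivial (G := A)
  let S := hfin.toFinset.erase l
  let h : Polynomial ℂ := ∏ μ ∈ S, (Polynomial.X - Polynomial.C μ)
  have hh : h.eval l ≠ 0 := by
    simp only [h, Polynomial.eval_prod, Finset.prod_ne_zero_iff]
    intro μ hμ
    simp only [Polynomial.eval_sub, Polynomial.eval_X, Polynomial.eval_C]
    exact sub_ne_zero.2 (Finset.ne_of_mem_erase hμ).symm
  let f : Polynomial ℂ := Polynomial.X * (Polynomial.C (l * h.eval l)⁻¹ * h)
  have hf1 : f.eval l = 1 := by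
    simp [f]; field_simp
  have hf0 : ∀ μ ∈ spectrum ℂ a, μ ≠ l → f.eval μ = 0 := by
    intro μ hμ hne
    have : h.eval μ = 0 := by
      simp only [h, Polynomial.eval_prod]
      refine Finset.prod_eq_zero (i := μ) (by simp [S, hμ, hne]) (by simp)
    simp [f, this]
  set b := Polynomial.aeval a f with hb
  have hsp : spectrum ℂ b ⊆ {0, 1} := by
    rw [hb, spectrum.map_polynomial_aeval]
    rintro _ ⟨k, hk, rfl⟩
    by_cases hkl : k = l
    · subst hkl; right; exact hf1
    · left; exact hf0 k hk hkl
  have h1b : (1:ℂ) ∈ spectrum ℂ b := by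
    rw [hb, spectrum.map_polynomial_aeval]
    exact ⟨l, hl, hf1⟩
  have hcom : ∀ q : Polynomial ℂ, Commute a (Polynomial.aeval a q) := by
    intro q
    have h1 : a = Polynomial.aeval a (Polynomial.X : Polynomial ℂ) := by simp
    change a * _ = _ * a
    nth_rewrite 1 [h1]
    nth_rewrite 4 [h1]
    rw [← map_mul, ← map_mul, mul_comm]
  obtain ⟨s, s', h1, h2, h2c, h3⟩ := idem_lift b hsp
  have has : Commute a s := h3 a (hcom f)
  refine ⟨b * s, Polynomial.aeval a (Polynomial.C (l * h.eval l)⁻¹ * h) * s, ?_,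
    (hcom _).mul_right has, h1, ?_, ?_⟩
  · rw [hb, ← mul_assoc]
    congr 1
    simp only [f]
    rw [map_mul, Polynomial.aeval_X]
  · intro h0
    rw [h0, sub_zero] at h2
    apply h1b
    rw [spectrum.mem_resolventSet_iff, map_one]
    have hs'2 : s' * (1 - b) = 1 := by
      refine Eq.trans ?_ h2.symm
      rw [mul_sub, sub_mul, mul_one, one_mul, h2c.eq]
    exact isUnit_iff_exists_and_exists.2 ⟨⟨s', h2.symm⟩, ⟨s', hs'2⟩⟩
  · intro μ hμ hne
    have hd : (Polynomial.X - Polynomial.C μ) ∣ f := Polynomial.dvd_iff_isRoot.2 (hf0 μ hμ hne)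
    obtain ⟨k, hk⟩ := hd
    refine ⟨Polynomial.aeval a k * s, ?_, (hcom k).mul_right has⟩
    rw [← mul_assoc, hb, hk]
    simp

lemma mem_nzSpec {x : A} {μ : ℂ} :
    μ ∈ nzSpec x ↔ ¬ IsUnit (algebraMap ℂ A μ - x) ∧ μ ≠ 0 := Iff.rfl

lemma nzSpec_comm (x y : A) : nzSpec (x * y) = nzSpec (y * x) := spectrum.nonzero_mul_comm x y

lemma encard_le_srank (x a : A) : (nzSpec (x * a)).encard ≤ srank a :=
  le_iSup (fun x : A => (nzSpec (x * a)).encard) x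

lemma srank_mul_left (x a : A) : srank (x * a) ≤ srank a := by
  refine iSup_le fun y => ?_
  rw [← mul_assoc]
  exact encard_le_srank _ _

lemma srank_mul_right (a x : A) : srank (a * x) ≤ srank a := by
  refine iSup_le fun y => ?_
  rw [← mul_assoc, nzSpec_comm, ← mul_assoc]
  exact encard_le_srank _ _

lemma one_le_srank {x a : A} {μ : ℂ} (h : μ ∈ nzSpec (x * a)) : 1 ≤ srank a :=
  (Set.one_le_encard_iff_nonempty.2 ⟨μ, h⟩).trans (encard_le_srank x a)

lemma spec_finite {x : A} (h : (nzSpec x).Finite) : (spectrum ℂ x).Finite := by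
  refine (h.insert 0).subset fun μ hμ => ?_
  by_cases h0 : μ = 0
  · left; exact h0
  · right; exact ⟨hμ, h0⟩

lemma exists_nz (hss : JacobsonSemisimple A) {w : A} (hw : w ≠ 0) :
    ∃ z, ∃ μ, μ ∈ nzSpec (z * w) := by
  by_contra hcon
  push Not at hcon
  apply hw
  have : w ∈ TwoSidedIdeal.jacobson (⊥ : TwoSidedIdeal A) := by
    rw [TwoSidedIdeal.mem_jacobson_iff]
    intro y
    have h1 := hcon y (-1)
    rw [mem_nzSpec] at h1
    have h2 : IsUnit (algebraMap ℂ A (-1) - y * w) := by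
      by_contra h; exact h1 ⟨h, by norm_num⟩
    obtain ⟨z, hz⟩ := h2.exists_left_inv
    refine ⟨-z, ?_⟩
    have : -z * y * w + -z - 1 = 0 := by
      rw [← hz, map_neg, map_one]; noncomm_ring
    rw [this]
    exact zero_mem _
  rw [hss] at this
  simpa using this

lemma one_mem_nzSpec {p : A} (hp : p * p = p) (hp0 : p ≠ 0) : (1:ℂ) ∈ nzSpec p := by
  refine ⟨fun h => hp0 ?_, by simp⟩
  rw [spectrum.mem_resolventSet_iff, map_one] at h
  have : (1 - p) * p = 0 := by rw [sub_mul, one_mul, hp, sub_self]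
  exact (h.mul_right_eq_zero).1 this

lemma scal_comm (μ : ℂ) (x : A) : x * algebraMap ℂ A μ = algebraMap ℂ A μ * x :=
  (Algebra.commutes μ x).symm

lemma scal_inv {μ : ℂ} (hμ : μ ≠ 0) : algebraMap ℂ A μ * algebraMap ℂ A μ⁻¹ = 1 := by
  rw [← map_mul, mul_inv_cancel₀ hμ, map_one]

lemma scal_inv' {μ : ℂ} (hμ : μ ≠ 0) : algebraMap ℂ A μ⁻¹ * algebraMap ℂ A μ = 1 := by
  rw [← map_mul, inv_mul_cancel₀ hμ, map_one]

lemma corner_iff {p s : A} (hp : p * p = p) (h1 : p * s = s) (h2 : s * p = s) {μ : ℂ}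
    (hμ : μ ≠ 0) :
    μ ∈ nzSpec s ↔ ¬ IsUnit (algebraMap ℂ A μ * p - s + (1 - p)) := by
  have key : algebraMap ℂ A μ - s =
      (algebraMap ℂ A μ * p - s + (1 - p)) * (p + algebraMap ℂ A μ * (1 - p)) := by
    have e1 : p * (algebraMap ℂ A μ * (1 - p)) = 0 := by
      rw [← mul_assoc, scal_comm, mul_assoc, mul_sub, mul_one, hp, sub_self, mul_zero]
    have e2 : s * (algebraMap ℂ A μ * (1 - p)) = 0 := by
      rw [← h2, mul_assoc, e1, mul_zero]
    simp only [mul_add, add_mul, sub_mul, mul_assoc, e1, e2, hp, h2, one_mul, mul_zero]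
    simp only [mul_sub, mul_one]
    abel
  have hu : IsUnit (p + algebraMap ℂ A μ * (1 - p)) := by
    have e1 : p * (1 - p) = 0 := by rw [mul_sub, mul_one, hp, sub_self]
    have e2 : (1 - p) * p = 0 := by rw [sub_mul, one_mul, hp, sub_self]
    have e3 : (1 - p) * (1 - p) = 1 - p := by rw [mul_sub, mul_one, e2, sub_zero]
    have gen : ∀ κ ν : ℂ, κ * ν = 1 →
        (p + algebraMap ℂ A κ * (1 - p)) * (p + algebraMap ℂ A ν * (1 - p)) = 1 := by
      intro κ ν hkn
      rw [← Algebra.smul_def, ← Algebra.smul_def]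
      rw [mul_add, add_mul, add_mul, hp, smul_mul_assoc, e2, mul_smul_comm, e1,
        smul_mul_smul_comm, e3, hkn]
      simp
    exact isUnit_iff_exists_and_exists.2 ⟨⟨_, gen μ μ⁻¹ (mul_inv_cancel₀ hμ)⟩,
      ⟨_, gen μ⁻¹ μ (inv_mul_cancel₀ hμ)⟩⟩
  rw [mem_nzSpec, key]
  constructor
  · rintro ⟨h, -⟩ h'
    exact h (h'.mul hu)
  · intro h
    refine ⟨fun h' => h ?_, hμ⟩
    obtain ⟨u, hu⟩ := hu
    rw [← hu] at h'
    simpa using h'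

lemma rank_drop {p q : A} (hp : p * p = p) (hq : q * q = q) (hpq : p * q = q) (hqp : q * p = q)
    (hne : q ≠ p) (hfin : srank p ≠ ⊤) : srank q + 1 ≤ srank p := by
  have hle : ∀ x : A, (nzSpec (x * q)).encard + 1 ≤ srank p := by
    intro x
    have e0 : nzSpec (x * q) = nzSpec (q * x * q) := by
      rw [mul_assoc q, nzSpec_comm q, mul_assoc, hq]
    rw [e0]
    set y := q * x * q with hy
    have hyq : y * q = y := by rw [hy, mul_assoc, hq]
    have hqy : q * y = y := by rw [hy, ← mul_assoc, ← mul_assoc, hq]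
    have hyp : y * p = y := by rw [hy, mul_assoc, hqp]
    have hyfin : (nzSpec y).Finite := by
      rw [← Set.encard_lt_top_iff, ← hyp]
      exact (encard_le_srank _ _).trans_lt (lt_top_iff_ne_top.2 hfin)
    obtain ⟨κ, hκ⟩ := ((hyfin.insert 0).infinite_compl).nonempty
    simp only [Set.mem_compl_iff, Set.mem_insert_iff, not_or] at hκ
    set r := p - q with hr
    have hr0 : r ≠ 0 := sub_ne_zero.2 hne.symm
    have hrr : r * r = r := by rw [hr, sub_mul, mul_sub, mul_sub, hp, hq, hpq, hqp]; abel
    have hyr : y * r = 0 := by rw [hr, mul_sub, hyp, hyq, sub_self]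
    have hqr : q * r = 0 := by rw [hr, mul_sub, hqp, hq, sub_self]
    have hrq : r * q = 0 := by rw [hr, sub_mul, hpq, hq, sub_self]
    have hrp : r * p = r := by rw [hr, sub_mul, hp, hqp]
    set y' := y + κ • r with hy'
    have hy'p : y' * p = y' := by rw [hy', add_mul, hyp, smul_mul_assoc, hrp]
    have hsub : insert κ (nzSpec y) ⊆ nzSpec y' := by
      intro μ hμ
      rcases hμ with rfl | hμ
      · refine mem_nzSpec.2 ⟨fun hu => hr0 ?_, hκ.1⟩
        refine hu.mul_right_eq_zero.1 ?_
        rw [sub_mul, hy', add_mul, hyr, smul_mul_assoc, hrr, ← Algebra.smul_def]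
        simp
      · have hμ0 : μ ≠ 0 := hμ.2
        refine mem_nzSpec.2 ⟨fun hu => ?_, hμ0⟩
        rw [corner_iff hq hqy hyq hμ0] at hμ
        apply hμ
        set m := algebraMap ℂ A μ - y' with hm
        have hmq : m * q = algebraMap ℂ A μ * q - y := by
          rw [hm, sub_mul, hy', add_mul, hyq, smul_mul_assoc, hrq]; simp
        have hqm : q * m = algebraMap ℂ A μ * q - y := by
          rw [hm, mul_sub, hy', mul_add, hqy, mul_smul_comm, hqr, scal_comm]; simp
        rw [← hmq]
        obtain ⟨u, hu⟩ := hu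
        have hum : (↑u⁻¹ : A) * m = 1 := by rw [← hu]; simp
        have hmu : m * (↑u⁻¹ : A) = 1 := by rw [← hu]; simp
        have hc : Commute q (↑u⁻¹ : A) := by
          have : Commute q (u : A) := by rw [hu]; exact hqm.trans hmq.symm
          exact this.units_inv_right
        have e1 : q * (1 - q) = 0 := by rw [mul_sub, mul_one, hq, sub_self]
        have e2 : (1 - q) * q = 0 := by rw [sub_mul, one_mul, hq, sub_self]
        have e3 : (1 - q) * (1 - q) = 1 - q := by rw [mul_sub, mul_one, e2, sub_zero]
        refine isUnit_iff_exists_and_exists.2 ⟨⟨q * ↑u⁻¹ + (1 - q), ?_⟩, ⟨↑u⁻¹ * q + (1 - q), ?_⟩⟩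
        · have a1 : m * q * (q * ↑u⁻¹) = q := by
            rw [mul_assoc, ← mul_assoc q, hq, ← mul_assoc, hmq, ← hqm, mul_assoc, hmu, mul_one]
          have a2 : m * q * (1 - q) = 0 := by rw [mul_assoc, e1, mul_zero]
          have a3 : (1 - q) * (q * ↑u⁻¹) = 0 := by rw [← mul_assoc, e2, zero_mul]
          rw [mul_add, add_mul, add_mul, a1, a2, a3, e3]; abel
        · have a1 : ↑u⁻¹ * q * (m * q) = q := by
            rw [hmq, ← hqm, mul_assoc, ← mul_assoc q, hq, hqm, ← hmq, ← mul_assoc, hum, one_mul]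
          have a2 : (1 - q) * (m * q) = 0 := by rw [hmq, ← hqm, ← mul_assoc, e2, zero_mul]
          have a3 : ↑u⁻¹ * q * (1 - q) = 0 := by rw [mul_assoc, e1, mul_zero]
          rw [mul_add, add_mul, add_mul, a1, a2, a3, e3]; abel
    calc (nzSpec y).encard + 1 = (insert κ (nzSpec y)).encard :=
          (Set.encard_insert_of_notMem hκ.2).symm
      _ ≤ (nzSpec y').encard := Set.encard_le_encard hsub
      _ ≤ srank p := by
          rw [← hy'p]; exact encard_le_srank _ _
  obtain ⟨n, hn⟩ := ENat.ne_top_iff_exists.1 hfin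
  have h1 : (1 : ℕ∞) ≤ srank p := le_add_self.trans (hle 0)
  have h2 : srank q ≤ srank p - 1 := iSup_le fun x => ENat.le_sub_of_add_le_right (by simp) (hle x)
  calc srank q + 1 ≤ srank p - 1 + 1 := by gcongr
    _ = srank p := tsub_add_cancel_of_le h1

lemma exists_min_idem (n : ℕ) : ∀ p : A, p * p = p → p ≠ 0 → srank p = n →
    ∃ q : A, q * q = q ∧ q ≠ 0 ∧ p * q = q ∧ srank q = 1 := by
  induction n using Nat.strong_induction_on with
  | _ n ih =>
  intro p hp hp0 hn
  have h1 : 1 ≤ srank p := one_le_srank (x := 1) (by rw [one_mul]; exact one_mem_nzSpec hp hp0)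
  by_cases hr : srank p = 1
  · exact ⟨p, hp, hp0, hp, hr⟩
  have hlt : 1 < srank p := lt_of_le_of_ne h1 (Ne.symm hr)
  have htop : srank p ≠ ⊤ := by rw [hn]; exact ENat.natCast_ne_top n
  obtain ⟨x, hx⟩ := lt_iSup_iff.1 hlt
  have e0 : nzSpec (x * p) = nzSpec (p * x * p) := by
    rw [mul_assoc p, nzSpec_comm p, mul_assoc, hp]
  rw [e0] at hx
  set t := p * x * p with ht
  have htp : t * p = t := by rw [ht, mul_assoc, hp]
  have hpt : p * t = t := by rw [ht, ← mul_assoc, ← mul_assoc, hp]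
  have hfin : (nzSpec t).Finite := by
    rw [← Set.encard_lt_top_iff, ← htp]
    exact (encard_le_srank _ _).trans_lt (lt_top_iff_ne_top.2 htop)
  obtain ⟨l, μ, hl, hμ, hne⟩ := Set.one_lt_encard_iff.1 hx
  obtain ⟨q, s, hqs, hts, hqq, hq0, hk⟩ := riesz t (spec_finite hfin) l hl.1 hl.2
  have hpq : p * q = q := by rw [hqs, ← mul_assoc, hpt]
  have hqp : q * p = q := by rw [hqs, hts.eq, mul_assoc, htp]
  have hqnep : q ≠ p := by
    intro heq
    obtain ⟨k, hk1, hk2⟩ := hk μ hμ.1 hne.symm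
    rw [heq] at hk1
    have hμ0 : μ ≠ 0 := hμ.2
    apply ((corner_iff hp hpt htp hμ0).1 hμ)
    have e1 : p * (1 - p) = 0 := by rw [mul_sub, mul_one, hp, sub_self]
    have e2 : (1 - p) * p = 0 := by rw [sub_mul, one_mul, hp, sub_self]
    have e3 : (1 - p) * (1 - p) = 1 - p := by rw [mul_sub, mul_one, e2, sub_zero]
    have hk1' : p = k * (t - algebraMap ℂ A μ) := by
      rw [hk1, sub_mul, mul_sub, hk2.eq, scal_comm]
    have f1 : algebraMap ℂ A μ * p - t = -((t - algebraMap ℂ A μ) * p) := by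
      rw [sub_mul, htp]; abel
    have f2 : algebraMap ℂ A μ * p - t = -(p * (t - algebraMap ℂ A μ)) := by
      rw [mul_sub, hpt, scal_comm]; abel
    refine isUnit_iff_exists_and_exists.2 ⟨⟨-(p * k * p) + (1 - p), ?_⟩,
      ⟨-(p * k * p) + (1 - p), ?_⟩⟩
    · have a1 : (algebraMap ℂ A μ * p - t) * -(p * k * p) = p := by
        calc (algebraMap ℂ A μ * p - t) * -(p * k * p)
            = (-(algebraMap ℂ A μ * p - t) * p) * k * p := by noncomm_ring
          _ = p * ((t - algebraMap ℂ A μ) * k) * p := by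
              have : (-(algebraMap ℂ A μ * p - t) * p) = p * (t - algebraMap ℂ A μ) := by
                rw [f1, neg_neg, mul_assoc, hp, ← neg_neg ((t - algebraMap ℂ A μ) * p), ← f1, f2, neg_neg]
              rw [this]; noncomm_ring
          _ = p := by rw [← hk1, hp, hp]
      have a2 : (algebraMap ℂ A μ * p - t) * (1 - p) = 0 := by
        rw [f1, neg_mul, mul_assoc, e1, mul_zero, neg_zero]
      have a3 : (1 - p) * -(p * k * p) = 0 := by
        rw [mul_neg, mul_assoc, ← mul_assoc, e2, zero_mul, neg_zero]
      rw [mul_add, add_mul, add_mul, a1, a2, a3, e3]; abel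
    · have a1 : -(p * k * p) * (algebraMap ℂ A μ * p - t) = p := by
        calc -(p * k * p) * (algebraMap ℂ A μ * p - t)
            = p * k * (p * -(algebraMap ℂ A μ * p - t)) := by noncomm_ring
          _ = p * (k * (t - algebraMap ℂ A μ)) * p := by
              have : (p * -(algebraMap ℂ A μ * p - t)) = (t - algebraMap ℂ A μ) * p := by
                rw [f2, neg_neg, ← mul_assoc, hp, ← neg_neg (p * (t - algebraMap ℂ A μ)), ← f2, f1, neg_neg]
              rw [this]; noncomm_ring
          _ = p := by rw [← hk1', hp, hp]
      have a2 : (1 - p) * (algebraMap ℂ A μ * p - t) = 0 := by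
        rw [f2, mul_neg, ← mul_assoc, e2, zero_mul, neg_zero]
      have a3 : -(p * k * p) * (1 - p) = 0 := by
        rw [neg_mul, mul_assoc, e1, mul_zero, neg_zero]
      rw [mul_add, add_mul, add_mul, a1, a2, a3, e3]; abel
  have hd := rank_drop hp hqq hpq hqp hqnep htop
  have hqtop : srank q ≠ ⊤ := by
    intro h; rw [h] at hd; exact htop (top_le_iff.1 (by simpa using hd))
  obtain ⟨k, hk'⟩ := ENat.ne_top_iff_exists.1 hqtop
  have hkn : k < n := by
    rw [← hk', hn] at hd
    have : k + 1 ≤ n := by exact_mod_cast hd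
    omega
  obtain ⟨q', h1, h2, h3, h4⟩ := ih k hkn q hqq hq0 hk'.symm
  exact ⟨q', h1, h2, by rw [← h3, ← mul_assoc, hpq], h4⟩

lemma corner_scalar (hss : JacobsonSemisimple A) {p : A} (hp : p * p = p) (hp0 : p ≠ 0)
    (hr : srank p = 1) (x : A) : ∃ l : ℂ, p * x * p = l • p := by
  set t := p * x * p with ht
  have htp : t * p = t := by rw [ht, mul_assoc, hp]
  have hpt : p * t = t := by rw [ht, ← mul_assoc, ← mul_assoc, hp]
  have e1 : p * (1 - p) = 0 := by rw [mul_sub, mul_one, hp, sub_self]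
  have e2 : (1 - p) * p = 0 := by rw [sub_mul, one_mul, hp, sub_self]
  have e3 : (1 - p) * (1 - p) = 1 - p := by rw [mul_sub, mul_one, e2, sub_zero]
  have hsub : ∀ s : A, s * p = s → ∀ μ ν, μ ∈ nzSpec s → ν ∈ nzSpec s → μ = ν := by
    intro s hs μ ν hμ hν
    have : (nzSpec s).encard ≤ 1 := by
      rw [← hr, ← hs]; exact encard_le_srank _ _
    exact Set.encard_le_one_iff.1 this μ ν hμ hν
  have hA : ∃ l : ℂ, ¬ IsUnit (algebraMap ℂ A l * p - t + (1 - p)) := by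
    by_cases hne : (nzSpec t).Nonempty
    · obtain ⟨l, hl⟩ := hne
      exact ⟨l, (corner_iff hp hpt htp hl.2).1 hl⟩
    · refine ⟨0, fun hu => hp0 ?_⟩
      have hsp : spectrum ℂ t ⊆ {0} := by
        intro μ hμ
        by_contra h0
        exact hne ⟨μ, hμ, h0⟩
      obtain ⟨u, hu⟩ := hu
      rw [map_zero, zero_mul, zero_sub] at hu
      have htu : t * (u : A) = -(t * t) := by
        rw [hu, mul_add, mul_sub, htp]; noncomm_ring
      have hut : (u : A) * t = -(t * t) := by
        rw [hu, add_mul, sub_mul, hpt]; noncomm_ring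
      have hc : Commute t (↑u⁻¹ : A) := by
        have : Commute t (u : A) := htu.trans hut.symm
        exact this.units_inv_right
      have hpe : p = -(t * ↑u⁻¹) := by
        have : p * (u : A) = -t := by rw [hu, mul_add, e1, mul_neg, hpt, add_zero]
        calc p = p * (u : A) * ↑u⁻¹ := by rw [mul_assoc]; simp
          _ = _ := by rw [this, neg_mul]
      set g : A := ↑u⁻¹ with hg
      have hppow : ∀ n : ℕ, p ^ (n + 1) = p := by
        intro n
        induction n with
        | zero => simp
        | succ n ih => rw [pow_succ, ih, hp]
      have hb := qn_bound t hsp (1 / (2 * (‖g‖ + 1))) (by positivity)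
      have hev : ∀ᶠ n : ℕ in Filter.atTop, ‖p‖ ≤ (1/2 : ℝ) ^ n := by
        filter_upwards [hb, Filter.eventually_gt_atTop 0] with n hn hn0
        obtain ⟨k, rfl⟩ : ∃ k, n = k + 1 := ⟨n - 1, by omega⟩
        have h1 : p = (-1) ^ (k+1) * (t ^ (k+1) * g ^ (k+1)) := by
          rw [← hc.mul_pow, ← neg_pow, ← hpe, hppow]
        have h2 : ‖p‖ ≤ ‖t ^ (k+1)‖ * ‖g ^ (k+1)‖ := by
          rcases neg_one_pow_eq_or A (k+1) with h | h
          · rw [h, one_mul] at h1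
            calc ‖p‖ = ‖t ^ (k+1) * g ^ (k+1)‖ := congrArg _ h1
              _ ≤ _ := norm_mul_le _ _
          · rw [h, neg_one_mul] at h1
            calc ‖p‖ = ‖t ^ (k+1) * g ^ (k+1)‖ := (congrArg _ h1).trans (norm_neg _)
              _ ≤ _ := norm_mul_le _ _
        calc ‖p‖ ≤ ‖t ^ (k+1)‖ * ‖g ^ (k+1)‖ := h2
          _ ≤ (1 / (2 * (‖g‖ + 1))) ^ (k+1) * (‖g‖ + 1) ^ (k+1) := by
              gcongr
              calc ‖g ^ (k+1)‖ ≤ ‖g‖ ^ (k+1) := norm_pow_le _ _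
                _ ≤ _ := by gcongr; linarith
          _ = (1/2) ^ (k+1) := by
              rw [← mul_pow]; congr 1; field_simp
      have hlim : Filter.Tendsto (fun n : ℕ => (1/2 : ℝ) ^ n) Filter.atTop (nhds 0) :=
        tendsto_pow_atTop_nhds_zero_of_lt_one (by norm_num) (by norm_num)
      have := ge_of_tendsto hlim hev
      exact norm_le_zero_iff.1 this
  obtain ⟨l, hl⟩ := hA
  refine ⟨l, ?_⟩
  set d := algebraMap ℂ A l * p - t with hd
  have hdp : d * p = d := by rw [hd, sub_mul, mul_assoc, hp, htp]
  have hpd : p * d = d := by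
    rw [hd, mul_sub, ← mul_assoc, scal_comm, mul_assoc, hp, hpt]
  by_contra hne
  have hd0 : d ≠ 0 := by
    intro h
    rw [hd, ← Algebra.smul_def] at h
    exact hne (sub_eq_zero.1 h).symm
  obtain ⟨y, ν, hν⟩ := exists_nz hss hd0
  have hν0 : ν ≠ 0 := hν.2
  set f := p * y * p with hf
  have hfp : f * p = f := by rw [hf, mul_assoc, hp]
  have hpf : p * f = f := by rw [hf, ← mul_assoc, ← mul_assoc, hp]
  have hν1 : ν ∈ nzSpec (f * d) := by
    have : f * d = p * (y * d) := by rw [hf, mul_assoc, hpd, mul_assoc]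
    rw [this, nzSpec_comm, mul_assoc, hdp]; exact hν
  have hν2 : ν ∈ nzSpec (d * f) := by rw [nzSpec_comm]; exact hν1
  have main : ∀ m : A, p * m = m → m * p = m → ν ∈ nzSpec m → IsUnit (-m + (1 - p)) := by
    intro m h1 h2 h3
    by_contra hnu
    have k1 : p * (m + algebraMap ℂ A ν * p) = m + algebraMap ℂ A ν * p := by
      rw [mul_add, h1, ← mul_assoc, scal_comm, mul_assoc, hp]
    have k2 : (m + algebraMap ℂ A ν * p) * p = m + algebraMap ℂ A ν * p := by
      rw [add_mul, h2, mul_assoc, hp]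
    have m1 : ν ∈ nzSpec (m + algebraMap ℂ A ν * p) := by
      rw [corner_iff hp k1 k2 hν0]
      convert hnu using 2
      abel
    have m2 : ν + ν ∈ nzSpec (m + algebraMap ℂ A ν * p) := by
      have hνν : ν + ν ≠ 0 := by rw [← two_mul]; simpa using hν0
      rw [corner_iff hp k1 k2 hνν]
      convert (corner_iff hp h1 h2 hν0).1 h3 using 2
      rw [map_add, add_mul]; abel
    have := hsub _ k2 _ _ m1 m2
    exact hν0 (by simpa using this)
  have u1 := main (f * d) (by rw [← mul_assoc, hpf]) (by rw [mul_assoc, hdp]) hν1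
  have u2 := main (d * f) (by rw [← mul_assoc, hpd]) (by rw [mul_assoc, hfp]) hν2
  have z1 : ∀ s : A, s * p = s → s * (1 - p) = 0 := fun s hs => by
    rw [mul_sub, mul_one, hs, sub_self]
  have z2 : ∀ s : A, p * s = s → (1 - p) * s = 0 := fun s hs => by
    rw [sub_mul, one_mul, hs, sub_self]
  have g1 : -(f * d) + (1 - p) = (-f + (1 - p)) * (d + (1 - p)) := by
    rw [mul_add, add_mul, add_mul, e3, z2 d hpd, neg_mul, neg_mul, z1 f hfp]; abel
  have g2 : -(d * f) + (1 - p) = (d + (1 - p)) * (-f + (1 - p)) := by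
    rw [mul_add, add_mul, add_mul, e3, mul_neg, mul_neg, z2 f hpf, z1 d hdp]; abel
  apply hl
  rw [g1] at u1
  rw [g2] at u2
  obtain ⟨a1, ha1⟩ := u1.exists_left_inv
  obtain ⟨a2, ha2⟩ := u2.exists_right_inv
  exact isUnit_iff_exists_and_exists.2 ⟨⟨_, by rw [← mul_assoc]; exact ha2⟩,
    ⟨a1 * (-f + (1 - p)), by rw [mul_assoc]; exact ha1⟩⟩

lemma mem_nz_smul {p : A} (hp : p * p = p) (hp0 : p ≠ 0) {l μ : ℂ} :
    μ ∈ nzSpec (l • p) ↔ μ = l ∧ μ ≠ 0 := by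
  constructor
  · intro h
    have hμ0 : μ ≠ 0 := h.2
    refine ⟨?_, hμ0⟩
    by_contra hne
    rw [corner_iff hp (by rw [mul_smul_comm, hp]) (by rw [smul_mul_assoc, hp]) hμ0] at h
    apply h
    rw [← Algebra.smul_def, ← sub_smul]
    have e1 : p * (1 - p) = 0 := by rw [mul_sub, mul_one, hp, sub_self]
    have e2 : (1 - p) * p = 0 := by rw [sub_mul, one_mul, hp, sub_self]
    have e3 : (1 - p) * (1 - p) = 1 - p := by rw [mul_sub, mul_one, e2, sub_zero]
    have gen : ∀ κ ν : ℂ, κ * ν = 1 → (κ • p + (1 - p)) * (ν • p + (1 - p)) = 1 := by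
      intro κ ν hkn
      rw [mul_add, add_mul, add_mul, e3, smul_mul_smul_comm, hp, hkn, smul_mul_assoc, e1,
        mul_smul_comm, e2]
      simp
    have hs : μ - l ≠ 0 := sub_ne_zero.2 hne
    exact isUnit_iff_exists_and_exists.2 ⟨⟨_, gen _ _ (mul_inv_cancel₀ hs)⟩,
      ⟨_, gen _ _ (inv_mul_cancel₀ hs)⟩⟩
  · rintro ⟨rfl, h0⟩
    refine mem_nzSpec.2 ⟨fun hu => hp0 (hu.mul_right_eq_zero.1 ?_), h0⟩
    rw [sub_mul, smul_mul_assoc, hp, ← Algebra.smul_def, sub_self]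

lemma core (hss : JacobsonSemisimple A) (hann : LeftAnnSocleTrivial A) {c : A} (hc : c ≠ 0) :
    ∃ p u v : A, p * p = p ∧ p ≠ 0 ∧ (∀ x, ∃ l : ℂ, p * x * p = l • p) ∧
      (∀ κ : ℂ, κ ≠ 0 → srank (κ • (u * p * v)) = 1) ∧ p * (v * c * u) * p ≠ 0 := by
  have h1 : ∃ y ∈ socle A, c * y ≠ 0 := by
    by_contra hcon
    push Not at hcon
    have : c ∈ {x : A | ∀ y ∈ socle A, x * y = 0} := hcon
    rw [hann] at this
    exact hc this
  obtain ⟨y, hy, hcy⟩ := h1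
  have hyr : srank y ≠ ⊤ := hy
  obtain ⟨z, l, hl⟩ := exists_nz hss hcy
  have hfin : (nzSpec (z * (c * y))).Finite := by
    rw [← Set.encard_lt_top_iff]
    exact ((encard_le_srank _ _).trans (srank_mul_left _ _)).trans_lt (lt_top_iff_ne_top.2 hyr)
  obtain ⟨p₀, s, hps, -, hpp, hp0, -⟩ := riesz _ (spec_finite hfin) l hl.1 hl.2
  have hr0 : srank p₀ ≠ ⊤ := by
    refine ne_top_of_le_ne_top hyr ?_
    rw [hps]
    exact (srank_mul_right _ _).trans ((srank_mul_left _ _).trans (srank_mul_left _ _))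
  obtain ⟨n, hn⟩ := ENat.ne_top_iff_exists.1 hr0
  obtain ⟨p, hp, hpn, hpp0, hr⟩ := exists_min_idem n p₀ hpp hp0 hn.symm
  have hz : z * c * (y * s * p) = p := by
    rw [← hpp0, hps] at hp ⊢
    calc z * c * (y * s * (z * (c * y) * s * p)) = z * (c * y) * s * (z * (c * y) * s * p) := by
          noncomm_ring
      _ = _ := by
          have : p₀ * p₀ * p = p₀ * p := by rw [hpp]
          rw [hps] at this
          rw [← mul_assoc]; exact this
  refine ⟨p, y * s * p, z, hp, hpn, corner_scalar hss hp hpn hr, ?_, ?_⟩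
  · intro κ hκ
    have e : κ • (y * s * p * p * z) = (κ • (y * s)) * p * z := by
      rw [mul_assoc (y * s), hp, smul_mul_assoc, smul_mul_assoc]
    apply le_antisymm
    · rw [e, ← hr]
      exact (srank_mul_right _ _).trans (srank_mul_left _ _)
    · apply one_le_srank (x := κ⁻¹ • c) (μ := 1)
      rw [smul_mul_smul_comm, inv_mul_cancel₀ hκ, one_smul, ← mul_assoc, nzSpec_comm]
      have : z * (c * (y * s * p * p)) = p := by
        rw [mul_assoc (y * s), hp, ← mul_assoc, hz]
      rw [this]
      exact one_mem_nzSpec hp hpn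
  · rw [hz, hp, hp]; exact hpn

lemma nz_core {p u v : A} (hp : p * p = p) (m : A) (κ l : ℂ)
    (hl : p * (v * m * u) * p = l • p) :
    nzSpec (m * (κ • (u * p * v))) = nzSpec ((κ * l) • p) := by
  have : m * (κ • (u * p * v)) = (κ • (m * u * p)) * (p * v) := by
    rw [mul_smul_comm, smul_mul_assoc]
    congr 1
    calc m * (u * p * v) = m * (u * (p * p) * v) := by rw [hp]
      _ = _ := by noncomm_ring
  rw [this, nzSpec_comm, mul_smul_comm, mul_smul, ← hl]
  congr 2
  noncomm_ring

lemma resolvent_iff {a x : A} {ε : ℂ} (hε : ε ≠ 0) (hu : IsUnit (1 - ε • a)) :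
    ε⁻¹ ∈ spectrum ℂ (a + x) ↔ (1:ℂ) ∈ nzSpec (Ring.inverse (1 - ε • a) * (ε • x)) := by
  rw [spectrum.mem_iff, mem_nzSpec, map_one]
  have : algebraMap ℂ A ε⁻¹ - (a + x) = algebraMap ℂ A ε⁻¹ *
      ((1 - ε • a) * (1 - Ring.inverse (1 - ε • a) * (ε • x))) := by
    rw [mul_sub (1 - ε • a), ← mul_assoc (1 - ε • a), Ring.mul_inverse_cancel _ hu, one_mul, mul_one,
      ← Algebra.smul_def, smul_sub, smul_sub, smul_smul, smul_smul, inv_mul_cancel₀ hε, one_smul,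
      one_smul, Algebra.algebraMap_eq_smul_one]
    abel
  rw [this]
  obtain ⟨w, hw⟩ := (isUnit_iff_ne_zero.2 (inv_ne_zero hε)).map (algebraMap ℂ A)
  obtain ⟨w', hw'⟩ := hu
  rw [← hw, ← hw', Units.isUnit_units_mul, Units.isUnit_units_mul]
  simp

lemma unique_mul (hss : JacobsonSemisimple A) (hann : LeftAnnSocleTrivial A) (a b : A)
    (h : ∀ x : A, srank x = 1 → spectrum ℂ (a * x) = spectrum ℂ (b * x)) : a = b := by
  by_contra hne
  obtain ⟨p, u, v, hp, hp0, hsc, hr, hc⟩ := core hss hann (sub_ne_zero.2 hne)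
  obtain ⟨la, hla⟩ := hsc (v * a * u)
  obtain ⟨lb, hlb⟩ := hsc (v * b * u)
  have hs := h _ (hr 1 one_ne_zero)
  have hs' : nzSpec (a * ((1:ℂ) • (u * p * v))) = nzSpec (b * ((1:ℂ) • (u * p * v))) := by
    unfold nzSpec; rw [hs]
  rw [nz_core hp a 1 la hla, nz_core hp b 1 lb hlb, one_mul, one_mul] at hs'
  have hab : la = lb := by
    by_cases h0 : la = 0
    · by_contra hne'
      have : lb ∈ nzSpec (la • p) := by
        rw [hs', mem_nz_smul hp hp0]
        exact ⟨rfl, fun h => hne' (h0.trans h.symm)⟩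
      rw [mem_nz_smul hp hp0] at this
      exact hne' this.1.symm
    · have : la ∈ nzSpec (lb • p) := by
        rw [← hs', mem_nz_smul hp hp0]; exact ⟨rfl, h0⟩
      rw [mem_nz_smul hp hp0] at this
      exact this.1
  apply hc
  have : p * (v * (a - b) * u) * p = p * (v * a * u) * p - p * (v * b * u) * p := by noncomm_ring
  rw [this, hla, hlb, hab, sub_self]

lemma aux_add {a b p u v : A} (hp : p * p = p) (hp0 : p ≠ 0)
    (hr : ∀ κ : ℂ, κ ≠ 0 → srank (κ • (u * p * v)) = 1)
    (h : ∀ x : A, srank x = 1 → spectrum ℂ (a + x) = spectrum ℂ (b + x))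
    {ε : ℂ} (hε : ε ≠ 0) (ha : IsUnit (1 - ε • a)) (hb : IsUnit (1 - ε • b)) {la lb : ℂ}
    (hla : p * (v * Ring.inverse (1 - ε • a) * u) * p = la • p)
    (hlb : p * (v * Ring.inverse (1 - ε • b) * u) * p = lb • p) (h0 : la ≠ 0) : la = lb := by
  have hκ : (ε * la)⁻¹ ≠ 0 := inv_ne_zero (mul_ne_zero hε h0)
  have hs := h _ (hr _ hκ)
  have e : ε * (ε * la)⁻¹ = la⁻¹ := by field_simp
  have h1 : ε⁻¹ ∈ spectrum ℂ (a + (ε * la)⁻¹ • (u * p * v)) := by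
    rw [resolvent_iff hε ha, smul_smul, e, nz_core hp _ _ la hla, mem_nz_smul hp hp0]
    exact ⟨(inv_mul_cancel₀ h0).symm, one_ne_zero⟩
  rw [hs, resolvent_iff hε hb, smul_smul, e, nz_core hp _ _ lb hlb, mem_nz_smul hp hp0] at h1
  have := h1.1
  field_simp at this
  exact this

lemma unique_add (hss : JacobsonSemisimple A) (hann : LeftAnnSocleTrivial A) (a b : A)
    (h : ∀ x : A, srank x = 1 → spectrum ℂ (a + x) = spectrum ℂ (b + x)) : a = b := by
  by_contra hne
  obtain ⟨p, u, v, hp, hp0, hsc, hr, hc⟩ := core hss hann (sub_ne_zero.2 hne)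
  have hcont : ∀ a : A, ContinuousAt (fun ε : ℂ => Ring.inverse (1 - ε • a)) 0 := by
    intro a
    have h1 : ContinuousAt (fun ε : ℂ => 1 - ε • a) 0 := by fun_prop
    refine ContinuousAt.comp (g := Ring.inverse) ?_ h1
    have := NormedRing.inverse_continuousAt (1 : Aˣ)
    simpa using this
  have hunit : ∀ a : A, ∀ᶠ ε : ℂ in nhds 0, IsUnit (1 - ε • a) := by
    intro a
    have h1 : ContinuousAt (fun ε : ℂ => 1 - ε • a) 0 := by fun_prop
    refine h1.eventually_mem (s := {x : A | IsUnit x}) ?_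
    exact Units.isOpen.mem_nhds (by simp)
  let F : ℂ → A := fun ε => p * (v * (Ring.inverse (1 - ε • a) * (a - b) *
    Ring.inverse (1 - ε • b)) * u) * p
  have hF : ContinuousAt F 0 := by
    have h1 := hcont a
    have h2 := hcont b
    exact (continuousAt_const.mul ((continuousAt_const.mul ((h1.mul continuousAt_const).mul h2)).mul
      continuousAt_const)).mul continuousAt_const
  have hF0 : F 0 = p * (v * (a - b) * u) * p := by simp [F]
  have hz : ∀ᶠ ε in nhdsWithin (0:ℂ) {0}ᶜ, F ε = 0 := by
    filter_upwards [nhdsWithin_le_nhds (hunit a), nhdsWithin_le_nhds (hunit b),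
      self_mem_nhdsWithin] with ε ha hb hε
    have hε : ε ≠ 0 := hε
    obtain ⟨la, hla⟩ := hsc (v * Ring.inverse (1 - ε • a) * u)
    obtain ⟨lb, hlb⟩ := hsc (v * Ring.inverse (1 - ε • b) * u)
    have hab : la = lb := by
      by_cases h0 : la = 0
      · by_cases h0' : lb = 0
        · rw [h0, h0']
        · exact (aux_add hp hp0 hr (fun x hx => (h x hx).symm) hε hb ha hlb hla h0').symm
      · exact aux_add hp hp0 hr h hε ha hb hla hlb h0
    have key : Ring.inverse (1 - ε • a) - Ring.inverse (1 - ε • b) =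
        ε • (Ring.inverse (1 - ε • a) * (a - b) * Ring.inverse (1 - ε • b)) := by
      have e1 := Ring.inverse_mul_cancel _ ha
      have e2 := Ring.mul_inverse_cancel _ hb
      set X := Ring.inverse (1 - ε • a)
      set Y := Ring.inverse (1 - ε • b)
      calc X - Y = X * ((1 - ε • b) * Y) - (X * (1 - ε • a)) * Y := by
            rw [e1, e2, mul_one, one_mul]
        _ = X * ((1 - ε • b) - (1 - ε • a)) * Y := by noncomm_ring
        _ = X * (ε • (a - b)) * Y := by
            congr 2; rw [smul_sub]; abel
        _ = _ := by rw [mul_smul_comm, smul_mul_assoc]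
    have : ε • F ε = 0 := by
      have : ε • F ε = p * (v * (Ring.inverse (1 - ε • a) - Ring.inverse (1 - ε • b)) * u) * p := by
        rw [key]; simp only [F, mul_smul_comm, smul_mul_assoc]
      rw [this, mul_sub, sub_mul, mul_sub, sub_mul, hla, hlb, hab, sub_self]
    exact (smul_eq_zero.1 this).resolve_left hε
  have hlim : Filter.Tendsto F (nhdsWithin (0:ℂ) {0}ᶜ) (nhds (F 0)) :=
    hF.tendsto.mono_left nhdsWithin_le_nhds
  have hlim0 : Filter.Tendsto F (nhdsWithin (0:ℂ) {0}ᶜ) (nhds 0) :=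
    (tendsto_const_nhds).congr' (hz.mono fun _ h => h.symm)
  exact hc (hF0 ▸ tendsto_nhds_unique hlim hlim0)

end helpers

theorem leftAnn_socle_trivial_iff_uniqueness
    {A : Type*} [NormedRing A] [NormOneClass A] [NormedAlgebra ℂ A] [CompleteSpace A]
    (hss : JacobsonSemisimple A) (hsoc : socle A ≠ {0}) :
    LeftAnnSocleTrivial A ↔
      ∀ a b : A,
        (a = b ↔ ∀ x : A, srank x = 1 → spectrum ℂ (a * x) = spectrum ℂ (b * x)) ∧
        (a = b ↔ ∀ x : A, srank x = 1 → spectrum ℂ (a + x) = spectrum ℂ (b + x)) := by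
  constructor
  · intro hann a b
    exact ⟨⟨fun h x _ => by rw [h], unique_mul hss hann a b⟩,
      ⟨fun h x _ => by rw [h], unique_add hss hann a b⟩⟩
  · intro h
    apply Set.eq_singleton_iff_unique_mem.2
    refine ⟨fun y _ => zero_mul y, fun c hc => ?_⟩
    refine (h c 0).1.2 fun x hx => ?_
    have hxs : x ∈ socle A := by
      change srank x ≠ ⊤
      rw [hx]; simp
    rw [hc x hxs, zero_mul]
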